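/- Consider the IQN setup and iteration, and assume additionally x^t ≠ x* for all t. There exist positive constants ε and δ such that: if ‖x⁰ − x*‖ < ε and ‖B_i⁰ − ∇²f_i(x*)‖_{M_i} < δ for M_i = ∇²f_i(x*)^{−1/2} and every i = 1,…,n, then there exists a strictly increasing sequence of indices (t_k)_{k≥0} such that lim_{k→∞} ‖x^{t_{k+1}} − x*‖ / ‖x^{t_k} − x*‖ = 0; i.e., some subsequence of the residuals ‖x^t − x*‖ converges to zero superlinearly. -/

import Mathlib

open Matrix Filter RealInnerProductSpace

noncomputable section

abbrev Vec (p : ℕ) := EuclideanSpace ℝ (Fin p)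
abbrev Mat (p : ℕ) := Matrix (Fin p) (Fin p) ℝ

/-- A matrix acting on Euclidean space as a linear map. -/
def applyM {p : ℕ} (A : Mat p) (v : Vec p) : Vec p := Matrix.toEuclideanCLM (𝕜 := ℝ) A v

/-- Operator norm of a matrix induced by the Euclidean vector norm. -/
def opNorm {p : ℕ} (A : Mat p) : ℝ := ‖Matrix.toEuclideanCLM (𝕜 := ℝ) A‖

/-- Frobenius norm of a matrix. -/
def frobNorm {p : ℕ} (A : Mat p) : ℝ := Real.sqrt (∑ i, ∑ j, (A i j)^2)

/-- Weighted matrix norm ‖A‖_M = ‖M A M‖_F. -/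
def wNorm {p : ℕ} (M A : Mat p) : ℝ := frobNorm (M * A * M)

/-- Underlying function of a Euclidean vector. -/
def toFn {p : ℕ} (v : Vec p) : Fin p → ℝ := (WithLp.equiv 2 (Fin p → ℝ)) v

/-- Outer product a bᵀ. -/
def outer {p : ℕ} (a b : Vec p) : Mat p := Matrix.vecMulVec (toFn a) (toFn b)

/-- Bilinear form uᵀ B v. -/
def quadForm {p : ℕ} (B : Mat p) (u v : Vec p) : ℝ := toFn u ⬝ᵥ B.mulVec (toFn v)

/-- Dot product aᵀ b. -/
def dotV {p : ℕ} (a b : Vec p) : ℝ := toFn a ⬝ᵥ toFn b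

/-- The BFGS update  B⁺ = B + yyᵀ/(yᵀs) − B s sᵀ B/(sᵀ B s). -/
def bfgsUpdate {p : ℕ} (B : Mat p) (s y : Vec p) : Mat p :=
  B + (dotV y s)⁻¹ • outer y y - (quadForm B s s)⁻¹ • (B * outer s s * B)

/-- `H` is the Hessian (matrix of second derivatives) of `g`. -/
def HasHessian {p : ℕ} (g : Vec p → ℝ) (H : Vec p → Mat p) : Prop :=
  ∀ x, HasFDerivAt (gradient g) (Matrix.toEuclideanCLM (𝕜 := ℝ) (H x) : Vec p →L[ℝ] Vec p) x

/-- The cyclic index `i_t = (t mod n) + 1` (0-indexed: `t mod n`). -/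
def cyc {n : ℕ} (hn : 1 ≤ n) (t : ℕ) : Fin n := ⟨t % n, Nat.mod_lt t hn⟩

/-- The IQN problem data: `n` twice continuously differentiable sample functions
`f i : ℝ^p → ℝ`, `μ`-strongly convex with `L`-Lipschitz gradients and `L̃`-Lipschitz
Hessians, and the optimizer `x*` of `f = (1/n) Σ f i`. -/
structure IQNProblem (p n : ℕ) where
  hp : 1 ≤ p
  hn : 1 ≤ n
  f : Fin n → Vec p → ℝ
  Hess : Fin n → Vec p → Mat p
  mu : ℝ
  Lg : ℝ
  Ltil : ℝ
  xstar : Vec p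
  hmu : 0 < mu
  hmuL : mu ≤ Lg
  hLtil : 0 < Ltil
  hC2 : ∀ i, ContDiff ℝ 2 (f i)
  hHess : ∀ i, HasHessian (f i) (Hess i)
  hlow : ∀ i, ∀ x xh : Vec p,
    mu * ‖x - xh‖^2 ≤ ⟪gradient (f i) x - gradient (f i) xh, x - xh⟫
  hup : ∀ i, ∀ x xh : Vec p,
    ⟪gradient (f i) x - gradient (f i) xh, x - xh⟫ ≤ Lg * ‖x - xh‖^2
  hLip : ∀ i, ∀ u v : Vec p, opNorm (Hess i u - Hess i v) ≤ Ltil * ‖u - v‖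
  hopt : gradient (fun x => (n : ℝ)⁻¹ * ∑ i, f i x) xstar = 0
  hmin : ∀ x : Vec p, (n : ℝ)⁻¹ * ∑ i, f i xstar ≤ (n : ℝ)⁻¹ * ∑ i, f i x

/-- A run of the IQN iteration: sequences `x^t`, `z_i^t` and symmetric matrices `B_i^t`
following the IQN update with cyclic index, all steps assumed well defined. -/
structure IQNState {p n : ℕ} (P : IQNProblem p n) where
  x : ℕ → Vec p
  z : Fin n → ℕ → Vec p
  B : Fin n → ℕ → Mat p
  hz0 : ∀ i, z i 0 = x 0
  hsym : ∀ i t, (B i t).IsSymm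
  hinv : ∀ t, IsUnit ((n : ℝ)⁻¹ • ∑ i, B i t)
  hx : ∀ t, x (t+1) = applyM ((n : ℝ)⁻¹ • ∑ i, B i t)⁻¹
      ((n : ℝ)⁻¹ • ∑ i, applyM (B i t) (z i t) - (n : ℝ)⁻¹ • ∑ i, gradient (P.f i) (z i t))
  hzupd : ∀ t, z (cyc P.hn t) (t+1) = x (t+1)
  hzfix : ∀ t, ∀ j, j ≠ cyc P.hn t → z j (t+1) = z j t
  hs : ∀ t, z (cyc P.hn t) (t+1) - z (cyc P.hn t) t ≠ 0
  hys : ∀ t, dotV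
      (gradient (P.f (cyc P.hn t)) (z (cyc P.hn t) (t+1)) -
        gradient (P.f (cyc P.hn t)) (z (cyc P.hn t) t))
      (z (cyc P.hn t) (t+1) - z (cyc P.hn t) t) ≠ 0
  hsBs : ∀ t, quadForm (B (cyc P.hn t) t)
      (z (cyc P.hn t) (t+1) - z (cyc P.hn t) t)
      (z (cyc P.hn t) (t+1) - z (cyc P.hn t) t) ≠ 0
  hBupd : ∀ t, B (cyc P.hn t) (t+1) = bfgsUpdate (B (cyc P.hn t) t)
      (z (cyc P.hn t) (t+1) - z (cyc P.hn t) t)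
      (gradient (P.f (cyc P.hn t)) (z (cyc P.hn t) (t+1)) -
        gradient (P.f (cyc P.hn t)) (z (cyc P.hn t) t))
  hBfix : ∀ t, ∀ j, j ≠ cyc P.hn t → B j (t+1) = B j t

/-!
A positive sequence tending to zero always has a superlinearly convergent subsequence, so it is
enough to show that the iteration converges locally.

Measured in the norm `wNorm (M i)`, in which `H i = ∇²f_i(x*)` becomes the identity, a BFGS step
with the exact secant vector `y = H i s` does not increase the deviation of `B i` from `H i`, as
long as this deviation is at most `1 / 3`. Since `y` differs from `H i s` by a quadratic error, a
true step increases the deviation by at most a multiple of `∑ i, ‖z i - x*‖`. On the other hand,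
small deviations make the new iterate at least twice as close to `x*` as the average copy, and then
a potential giving the largest weight to the most recently updated copies drops by a fixed fraction
of `∑ i, ‖z i - x*‖` at every step. The drop of the potential pays for the growth of the deviations,
so that a bound on deviation plus potential is preserved, and the potential decays geometrically.
-/

section Matrix

variable {p : ℕ}

lemma mul_applyM (A B : Mat p) (v : Vec p) : applyM (A * B) v = applyM A (applyM B v) := by
  simp [applyM]

lemma one_applyM (v : Vec p) : applyM 1 v = v := by
  simp [applyM]

lemma add_applyM (A B : Mat p) (v : Vec p) : applyM (A + B) v = applyM A v + applyM B v := by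
  simp [applyM]

lemma sub_applyM (A B : Mat p) (v : Vec p) : applyM (A - B) v = applyM A v - applyM B v := by
  simp [applyM]

lemma smul_applyM (c : ℝ) (A : Mat p) (v : Vec p) : applyM (c • A) v = c • applyM A v := by
  simp [applyM]

lemma sum_applyM {ι : Type*} (I : Finset ι) (A : ι → Mat p) (v : Vec p) :
    applyM (∑ i ∈ I, A i) v = ∑ i ∈ I, applyM (A i) v := by
  simp [applyM, map_sum]

lemma applyM_add (A : Mat p) (u v : Vec p) : applyM A (u + v) = applyM A u + applyM A v :=
  map_add _ u v

lemma applyM_sub (A : Mat p) (u v : Vec p) : applyM A (u - v) = applyM A u - applyM A v :=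
  map_sub _ u v

lemma applyM_zero (A : Mat p) : applyM A 0 = 0 :=
  map_zero _

lemma norm_applyM_le_opNorm (A : Mat p) (v : Vec p) : ‖applyM A v‖ ≤ opNorm A * ‖v‖ :=
  ContinuousLinearMap.le_opNorm _ _

lemma dotV_eq_inner (u v : Vec p) : dotV u v = ⟪u, v⟫ := by
  simp [dotV, toFn, EuclideanSpace.inner_eq_star_dotProduct, dotProduct_comm]

lemma quadForm_eq_inner (A : Mat p) (u v : Vec p) : quadForm A u v = ⟪u, applyM A v⟫ :=
  (inner_toEuclideanCLM A u v).symm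

lemma inner_applyM_left {A : Mat p} (hA : A.IsSymm) (u v : Vec p) :
    ⟪applyM A u, v⟫ = ⟪u, applyM A v⟫ := by
  rw [real_inner_comm, applyM, applyM, inner_toEuclideanCLM, inner_toEuclideanCLM,
    dotProduct_mulVec, ← mulVec_transpose, hA.eq, dotProduct_comm]

lemma mul_outer (A : Mat p) (u v : Vec p) : A * outer u v = outer (applyM A u) v :=
  mul_vecMulVec A _ _

lemma outer_mul {A : Mat p} (hA : A.IsSymm) (u v : Vec p) :
    outer u v * A = outer u (applyM A v) := by
  rw [outer, vecMulVec_mul, ← mulVec_transpose, hA.eq]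
  rfl

lemma applyM_outer (u v w : Vec p) : applyM (outer u v) w = ⟪v, w⟫ • u := by
  ext i
  rw [← dotV_eq_inner]
  simp [applyM, outer, toFn, dotV, vecMulVec_mulVec, mul_comm]

lemma trace_outer (u v : Vec p) : (outer u v).trace = ⟪u, v⟫ := by
  rw [outer, trace_vecMulVec, ← dotV_eq_inner, dotV]

lemma isSymm_outer (u : Vec p) : (outer u u).IsSymm :=
  transpose_vecMulVec _ _

lemma outer_add_left (u v w : Vec p) : outer (u + v) w = outer u w + outer v w :=
  add_vecMulVec _ _ _

lemma outer_add_right (u v w : Vec p) : outer u (v + w) = outer u v + outer u w :=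
  vecMulVec_add _ _ _

end Matrix

section FrobeniusNorm

open scoped Matrix.Norms.Frobenius

variable {p : ℕ}

lemma frobNorm_eq_norm (A : Mat p) : frobNorm A = ‖A‖ := by
  simp [frobenius_norm_def, frobNorm, Real.sqrt_eq_rpow]

lemma frobNorm_nonneg (A : Mat p) : 0 ≤ frobNorm A :=
  Real.sqrt_nonneg _

lemma frobNorm_add_le (A B : Mat p) : frobNorm (A + B) ≤ frobNorm A + frobNorm B := by
  simp only [frobNorm_eq_norm]
  exact norm_add_le A B

lemma frobNorm_sub_le (A B : Mat p) : frobNorm (A - B) ≤ frobNorm A + frobNorm B := by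
  simp only [frobNorm_eq_norm]
  exact norm_sub_le A B

lemma frobNorm_smul (c : ℝ) (A : Mat p) : frobNorm (c • A) = |c| * frobNorm A := by
  simp only [frobNorm_eq_norm]
  exact norm_smul c A

lemma frobNorm_sq (A : Mat p) : frobNorm A ^ 2 = (A * Aᵀ).trace := by
  rw [frobNorm, Real.sq_sqrt (by positivity)]
  simp [trace, mul_apply, sq]

lemma frobNorm_outer (u v : Vec p) : frobNorm (outer u v) = ‖u‖ * ‖v‖ := by
  have h : frobNorm (outer u v) ^ 2 = (‖u‖ * ‖v‖) ^ 2 := by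
    have hT : (outer u v)ᵀ = outer v u := transpose_vecMulVec _ _
    rw [frobNorm_sq, hT, mul_outer, applyM_outer, trace_outer, inner_smul_left,
      real_inner_self_eq_norm_sq, real_inner_self_eq_norm_sq, conj_trivial]
    ring
  exact (pow_left_inj₀ (frobNorm_nonneg _) (by positivity) two_ne_zero).1 h

lemma norm_applyM_le_frobNorm (A : Mat p) (v : Vec p) : ‖applyM A v‖ ≤ frobNorm A * ‖v‖ := by
  rw [EuclideanSpace.norm_eq, EuclideanSpace.norm_eq, frobNorm, ← Real.sqrt_mul (by positivity),
    Finset.sum_mul]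
  refine Real.sqrt_le_sqrt (Finset.sum_le_sum fun i _ => ?_)
  simp only [applyM, ofLp_toEuclideanCLM, mulVec, dotProduct, Real.norm_eq_abs, sq_abs]
  exact Finset.sum_mul_sq_le_sq_mul_sq _ _ _

lemma abs_inner_applyM_le (A : Mat p) (v : Vec p) :
    |⟪v, applyM A v⟫| ≤ frobNorm A * ‖v‖ ^ 2 :=
  calc |⟪v, applyM A v⟫| ≤ ‖v‖ * ‖applyM A v‖ := abs_real_inner_le_norm _ _
    _ ≤ ‖v‖ * (frobNorm A * ‖v‖) := by gcongr; exact norm_applyM_le_frobNorm A v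
    _ = frobNorm A * ‖v‖ ^ 2 := by ring

end FrobeniusNorm

section BFGS

variable {p : ℕ}

lemma bfgsUpdate_one_add_self_sub_one {E : Mat p} (hE : E.IsSymm) (s : Vec p) :
    bfgsUpdate (1 + E) s s - 1 = E + ⟪s, s⟫⁻¹ • outer s s -
      (⟪s, s⟫ + ⟪s, applyM E s⟫)⁻¹ • outer (s + applyM E s) (s + applyM E s) := by
  have hB : (1 + E).IsSymm := isSymm_one.add hE
  rw [bfgsUpdate, mul_outer, outer_mul hB, quadForm_eq_inner, dotV_eq_inner, add_applyM,
    one_applyM, inner_add_right]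
  abel

lemma frobNorm_bfgsUpdate_one_add_self_sub_one_sq {E : Mat p} (hE : E.IsSymm) {s : Vec p}
    (hs : s ≠ 0) (hb : ⟪s, s⟫ + ⟪s, applyM E s⟫ ≠ 0) :
    frobNorm (bfgsUpdate (1 + E) s s - 1) ^ 2 = frobNorm E ^ 2 +
      (⟪s, applyM E s⟫ ^ 2 + ⟪applyM E s, applyM E s⟫ ^ 2
        - 2 * ⟪s, s⟫ * ⟪applyM E s, applyM E s⟫
        - 2 * ⟪applyM E s, applyM E (applyM E s)⟫ * (⟪s, s⟫ + ⟪s, applyM E s⟫)) /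
        (⟪s, s⟫ + ⟪s, applyM E s⟫) ^ 2 := by
  rw [bfgsUpdate_one_add_self_sub_one hE]
  set v := s + applyM E s with hv
  set S : ℝ := ⟪s, s⟫ with hS
  set b : ℝ := S + ⟪s, applyM E s⟫ with hb'
  have hS0 : S ≠ 0 := inner_self_ne_zero.2 hs
  have hsymm : (E + S⁻¹ • outer s s - b⁻¹ • outer v v).IsSymm :=
    (hE.add ((isSymm_outer s).smul _)).sub ((isSymm_outer v).smul _)
  have hes : ⟪applyM E s, s⟫ = ⟪s, applyM E s⟫ := real_inner_comm _ _
  have hsEe : ⟪s, applyM E (applyM E s)⟫ = ⟪applyM E s, applyM E s⟫ :=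
    (inner_applyM_left hE _ _).symm
  have hEes : ⟪applyM E (applyM E s), s⟫ = ⟪applyM E s, applyM E s⟫ := inner_applyM_left hE _ _
  have hEee : ⟪applyM E (applyM E s), applyM E s⟫ = ⟪applyM E s, applyM E (applyM E s)⟫ :=
    real_inner_comm _ _
  rw [frobNorm_sq, frobNorm_sq, hsymm.eq, hE.eq]
  simp only [Matrix.mul_add, Matrix.mul_sub, Matrix.add_mul, Matrix.sub_mul, Matrix.mul_smul,
    Matrix.smul_mul, mul_outer, outer_mul hE, applyM_outer, trace_add, trace_sub, trace_smul,
    trace_outer, smul_eq_mul, inner_smul_left, conj_trivial]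
  simp only [hv, applyM_add, inner_add_left, inner_add_right, hes, hsEe, hEes, hEee, ← hS]
  have hβ : ⟪s, applyM E s⟫ = b - S := by rw [hb']; ring
  rw [hβ]
  field_simp
  ring

lemma bfgs_numerator_nonpos {η S β q r : ℝ} (hη0 : 0 ≤ η) (hη : η ≤ 1 / 3) (hS : 0 ≤ S)
    (hq : 0 ≤ q) (hb : 0 ≤ S + β) (hβ : β ≤ η * S) (hβq : β ^ 2 ≤ S * q) (hqS : q ≤ η ^ 2 * S)
    (hr : -r ≤ η * q) : β ^ 2 + q ^ 2 - 2 * S * q - 2 * r * (S + β) ≤ 0 := by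
  have hrb : -(2 * r * (S + β)) ≤ 2 * (η * q) * ((1 + η) * S) :=
    calc -(2 * r * (S + β)) = 2 * -r * (S + β) := by ring
      _ ≤ 2 * (η * q) * ((1 + η) * S) := by
        gcongr
        linarith
  calc β ^ 2 + q ^ 2 - 2 * S * q - 2 * r * (S + β)
      ≤ S * q + q * (η ^ 2 * S) - 2 * S * q + 2 * (η * q) * ((1 + η) * S) := by
        linarith [mul_le_mul_of_nonneg_left hqS hq]
    _ = S * q * ((1 + η) * (3 * η - 1)) := by ring
    _ ≤ 0 := mul_nonpos_of_nonneg_of_nonpos (by positivity)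
        (mul_nonpos_of_nonneg_of_nonpos (by positivity) (by linarith))

lemma frobNorm_bfgsUpdate_one_add_self_sub_one_le {E : Mat p} (hE : E.IsSymm)
    (hE3 : frobNorm E ≤ 1 / 3) {s : Vec p} (hs : s ≠ 0) :
    frobNorm (bfgsUpdate (1 + E) s s - 1) ≤ frobNorm E := by
  have hη : 0 ≤ frobNorm E := frobNorm_nonneg E
  have hS : 0 < ⟪s, s⟫ := real_inner_self_pos.2 hs
  have hq : 0 ≤ ⟪applyM E s, applyM E s⟫ := real_inner_self_nonneg
  have hβ : |⟪s, applyM E s⟫| ≤ frobNorm E * ⟪s, s⟫ := by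
    simpa only [real_inner_self_eq_norm_sq] using abs_inner_applyM_le E s
  have hr : |⟪applyM E s, applyM E (applyM E s)⟫|
      ≤ frobNorm E * ⟪applyM E s, applyM E s⟫ := by
    simpa only [real_inner_self_eq_norm_sq] using abs_inner_applyM_le E (applyM E s)
  have hβq : ⟪s, applyM E s⟫ ^ 2 ≤ ⟪s, s⟫ * ⟪applyM E s, applyM E s⟫ := by
    simpa only [sq] using real_inner_mul_inner_self_le s (applyM E s)
  have hqS : ⟪applyM E s, applyM E s⟫ ≤ frobNorm E ^ 2 * ⟪s, s⟫ := by
    rw [real_inner_self_eq_norm_sq, real_inner_self_eq_norm_sq, ← mul_pow]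
    gcongr
    exact norm_applyM_le_frobNorm E s
  have hb : 0 < ⟪s, s⟫ + ⟪s, applyM E s⟫ := by nlinarith [(abs_le.1 hβ).1]
  refine le_of_sq_le_sq ?_ hη
  rw [frobNorm_bfgsUpdate_one_add_self_sub_one_sq hE hs hb.ne']
  have hnum := bfgs_numerator_nonpos hη hE3 hS.le hq hb.le (abs_le.1 hβ).2 hβq hqS
    ((neg_le_abs _).trans hr)
  exact add_le_of_nonpos_right (div_nonpos_of_nonpos_of_nonneg hnum (sq_nonneg _))

lemma inv_smul_outer_sub_inv_smul_outer {s y : Vec p} (hs : s ≠ 0) (hys : ⟪y, s⟫ ≠ 0) :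
    ⟪y, s⟫⁻¹ • outer y y - ⟪s, s⟫⁻¹ • outer s s =
      ⟪y, s⟫⁻¹ • (outer (y - s) y + outer s (y - s) -
        (⟪y - s, s⟫ / ⟪s, s⟫) • outer s s) := by
  have hS : ⟪s, s⟫ ≠ 0 := inner_self_ne_zero.2 hs
  have hyy : outer y y = outer s s + (outer (y - s) y + outer s (y - s)) := by
    nth_rw 1 [← sub_add_cancel y s, outer_add_left]
    nth_rw 3 [← sub_add_cancel y s]
    rw [outer_add_right]
    abel
  have hcoeff : ⟪y, s⟫⁻¹ * (⟪y - s, s⟫ / ⟪s, s⟫) = ⟪s, s⟫⁻¹ - ⟪y, s⟫⁻¹ := by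
    rw [inner_sub_left]
    field_simp
  rw [smul_sub, smul_smul, hcoeff, hyy, smul_add, sub_smul]
  abel

lemma frobNorm_inv_smul_outer_sub_le {s y : Vec p} (hs : s ≠ 0) {θ : ℝ} (hθ : θ ≤ 1 / 2)
    (hy : ‖y - s‖ ≤ θ * ‖s‖) :
    frobNorm (⟪y, s⟫⁻¹ • outer y y - ⟪s, s⟫⁻¹ • outer s s) ≤ 7 * θ := by
  have hs0 : 0 < ‖s‖ := norm_pos_iff.2 hs
  have hθ0 : 0 ≤ θ := nonneg_of_mul_nonneg_left ((norm_nonneg _).trans hy) hs0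
  have hds : |⟪y - s, s⟫| ≤ θ * ‖s‖ ^ 2 :=
    calc |⟪y - s, s⟫| ≤ ‖y - s‖ * ‖s‖ := abs_real_inner_le_norm _ _
      _ ≤ θ * ‖s‖ * ‖s‖ := by gcongr
      _ = θ * ‖s‖ ^ 2 := by ring
  have hys_le : ‖s‖ ^ 2 / 2 ≤ ⟪y, s⟫ := by
    have hsplit : ⟪y, s⟫ = ⟪y - s, s⟫ + ‖s‖ ^ 2 := by
      rw [inner_sub_left, real_inner_self_eq_norm_sq, sub_add_cancel]
    nlinarith [(abs_le.1 hds).1]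
  have hys : 0 < ⟪y, s⟫ := lt_of_lt_of_le (by positivity) hys_le
  have hyn : ‖y‖ ≤ 3 / 2 * ‖s‖ := by
    have := norm_le_norm_add_norm_sub' y s
    nlinarith
  have hbracket : frobNorm (outer (y - s) y + outer s (y - s) -
      (⟪y - s, s⟫ / ⟪s, s⟫) • outer s s) ≤ 7 / 2 * θ * ‖s‖ ^ 2 :=
    calc _ ≤ ‖y - s‖ * ‖y‖ + ‖s‖ * ‖y - s‖ + |⟪y - s, s⟫| := by
          refine (frobNorm_sub_le _ _).trans (add_le_add ((frobNorm_add_le _ _).trans ?_) ?_)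
          · rw [frobNorm_outer, frobNorm_outer]
          · rw [frobNorm_smul, frobNorm_outer, real_inner_self_eq_norm_sq, abs_div,
              abs_of_pos (pow_pos hs0 2), ← sq, div_mul_cancel₀ _ (pow_pos hs0 2).ne']
      _ ≤ θ * ‖s‖ * (3 / 2 * ‖s‖) + ‖s‖ * (θ * ‖s‖) + θ * ‖s‖ ^ 2 := by gcongr
      _ = 7 / 2 * θ * ‖s‖ ^ 2 := by ring
  rw [inv_smul_outer_sub_inv_smul_outer hs hys.ne', frobNorm_smul, abs_of_pos (inv_pos.2 hys),
    inv_mul_le_iff₀ hys]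
  nlinarith

theorem frobNorm_bfgsUpdate_one_add_sub_one_le {E : Mat p} (hE : E.IsSymm)
    (hE3 : frobNorm E ≤ 1 / 3) {s y : Vec p} (hs : s ≠ 0) {θ : ℝ} (hθ : θ ≤ 1 / 2)
    (hy : ‖y - s‖ ≤ θ * ‖s‖) :
    frobNorm (bfgsUpdate (1 + E) s y - 1) ≤ frobNorm E + 7 * θ := by
  have hsplit : bfgsUpdate (1 + E) s y - 1 = (bfgsUpdate (1 + E) s s - 1) +
      (⟪y, s⟫⁻¹ • outer y y - ⟪s, s⟫⁻¹ • outer s s) := by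
    rw [bfgsUpdate, bfgsUpdate, dotV_eq_inner, dotV_eq_inner]
    abel
  rw [hsplit]
  exact (frobNorm_add_le _ _).trans (add_le_add
    (frobNorm_bfgsUpdate_one_add_self_sub_one_le hE hE3 hs)
    (frobNorm_inv_smul_outer_sub_le hs hθ hy))

lemma mul_bfgsUpdate_mul {M B : Mat p} (hM : M.IsSymm) (hdet : IsUnit M.det) (hB : B.IsSymm)
    (s y : Vec p) :
    M * bfgsUpdate B s y * M = bfgsUpdate (M * B * M) (applyM M⁻¹ s) (applyM M y) := by
  have hMs : applyM M (applyM M⁻¹ s) = s := by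
    rw [← mul_applyM, mul_nonsing_inv M hdet, one_applyM]
  have hMBM : (M * B * M).IsSymm := by
    simp only [IsSymm, transpose_mul, hM.eq, hB.eq, Matrix.mul_assoc]
  have hMBMs : applyM (M * B * M) (applyM M⁻¹ s) = applyM M (applyM B s) := by
    rw [mul_applyM, hMs, mul_applyM]
  have hys : dotV (applyM M y) (applyM M⁻¹ s) = dotV y s := by
    rw [dotV_eq_inner, inner_applyM_left hM, hMs, dotV_eq_inner]
  have hsBs : quadForm (M * B * M) (applyM M⁻¹ s) (applyM M⁻¹ s) = quadForm B s s := by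
    rw [quadForm_eq_inner, hMBMs, ← inner_applyM_left hM, hMs, quadForm_eq_inner]
  rw [bfgsUpdate, bfgsUpdate, hys, hsBs]
  simp only [mul_outer, outer_mul hB, outer_mul hMBM, hMBMs, Matrix.mul_sub, Matrix.sub_mul,
    Matrix.mul_add, Matrix.add_mul, Matrix.mul_smul, Matrix.smul_mul, outer_mul hM]

end BFGS

lemma norm_applyM_le_wNorm {p : ℕ} {M : Mat p} (hM : IsUnit M.det) (A : Mat p) (v : Vec p) :
    ‖applyM A v‖ ≤ opNorm M⁻¹ ^ 2 * wNorm M A * ‖v‖ := by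
  have hM0 : 0 ≤ opNorm M⁻¹ := norm_nonneg _
  have hA : M⁻¹ * (M * A * M * M⁻¹) = A := by
    rw [mul_nonsing_inv_cancel_right _ _ hM, nonsing_inv_mul_cancel_left _ _ hM]
  calc ‖applyM A v‖ = ‖applyM M⁻¹ (applyM (M * A * M) (applyM M⁻¹ v))‖ := by
        rw [← mul_applyM, ← mul_applyM, Matrix.mul_assoc, hA]
    _ ≤ opNorm M⁻¹ * (wNorm M A * (opNorm M⁻¹ * ‖v‖)) := by
        refine (norm_applyM_le_opNorm _ _).trans ?_
        gcongr
        refine (norm_applyM_le_frobNorm _ _).trans ?_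
        exact mul_le_mul_of_nonneg_left (norm_applyM_le_opNorm _ _) (frobNorm_nonneg _)
    _ = opNorm M⁻¹ ^ 2 * wNorm M A * ‖v‖ := by ring

/-- `M` is a symmetric inverse square root of `H`, as is `∇²f_i(x*)^{-1/2}` of `∇²f_i(x*)`; in the
norm `wNorm M` the matrix `H` plays the role of the identity. -/
structure IsInvSqrt {p : ℕ} (M H : Mat p) : Prop where
  isSymm : M.IsSymm
  mul_mul_eq_one : M * H * M = 1

namespace IsInvSqrt

variable {p : ℕ} {M H B : Mat p}

lemma of_posDef (hM : M.PosDef) (hMHM : M * H * M = 1) : IsInvSqrt M H :=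
  ⟨by simpa [IsSymm] using hM.isHermitian.eq, hMHM⟩

lemma isUnit_det (h : IsInvSqrt M H) : IsUnit M.det :=
  isUnit_det_of_left_inverse h.mul_mul_eq_one

lemma inv_eq_mul (h : IsInvSqrt M H) : M⁻¹ = M * H :=
  inv_eq_left_inv h.mul_mul_eq_one

lemma applyM_applyM_inv (h : IsInvSqrt M H) (v : Vec p) : applyM M (applyM M⁻¹ v) = v := by
  rw [← mul_applyM, mul_nonsing_inv M h.isUnit_det, one_applyM]

lemma norm_le_opNorm_mul (h : IsInvSqrt M H) (v : Vec p) : ‖v‖ ≤ opNorm M * ‖applyM M⁻¹ v‖ := by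
  simpa only [h.applyM_applyM_inv] using norm_applyM_le_opNorm M (applyM M⁻¹ v)

lemma mul_mul_eq_one_add (h : IsInvSqrt M H) (B : Mat p) : M * B * M = 1 + M * (B - H) * M := by
  rw [Matrix.mul_sub, Matrix.sub_mul, h.mul_mul_eq_one, add_sub_cancel]

lemma isSymm_right (h : IsInvSqrt M H) : H.IsSymm := by
  have hH : H = M⁻¹ * M⁻¹ := by
    nth_rw 2 [h.inv_eq_mul]
    rw [nonsing_inv_mul_cancel_left _ _ h.isUnit_det]
  have hM : M⁻¹.IsSymm := by rw [IsSymm, transpose_nonsing_inv, h.isSymm.eq]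
  rw [hH, IsSymm, transpose_mul, hM.eq]

theorem wNorm_bfgsUpdate_sub_le (h : IsInvSqrt M H) (hB : B.IsSymm)
    (hBH : wNorm M (B - H) ≤ 1 / 3) {s y : Vec p} (hs : s ≠ 0) {κ : ℝ}
    (hy : ‖y - applyM H s‖ ≤ κ * ‖s‖) (hκ : opNorm M ^ 2 * κ ≤ 1 / 2) :
    wNorm M (bfgsUpdate B s y - H) ≤ wNorm M (B - H) + 7 * (opNorm M ^ 2 * κ) := by
  have hM0 : 0 ≤ opNorm M := norm_nonneg _
  have hκ0 : 0 ≤ κ :=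
    nonneg_of_mul_nonneg_left ((norm_nonneg _).trans hy) (norm_pos_iff.2 hs)
  have hsymm : (M * (B - H) * M).IsSymm := by
    simp only [IsSymm, transpose_mul, h.isSymm.eq, (hB.sub h.isSymm_right).eq, Matrix.mul_assoc]
  have hs' : applyM M⁻¹ s ≠ 0 := fun h0 => hs <| by
    rw [← h.applyM_applyM_inv s, h0, applyM_zero]
  have hy' : ‖applyM M y - applyM M⁻¹ s‖ ≤ opNorm M ^ 2 * κ * ‖applyM M⁻¹ s‖ :=
    calc ‖applyM M y - applyM M⁻¹ s‖ = ‖applyM M (y - applyM H s)‖ := by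
          rw [h.inv_eq_mul, mul_applyM, applyM_sub]
      _ ≤ opNorm M * ‖y - applyM H s‖ := norm_applyM_le_opNorm _ _
      _ ≤ opNorm M * (κ * (opNorm M * ‖applyM M⁻¹ s‖)) := by
          gcongr
          exact hy.trans (by gcongr; exact h.norm_le_opNorm_mul s)
      _ = opNorm M ^ 2 * κ * ‖applyM M⁻¹ s‖ := by ring
  have hconj : M * (bfgsUpdate B s y - H) * M =
      bfgsUpdate (1 + M * (B - H) * M) (applyM M⁻¹ s) (applyM M y) - 1 := by
    rw [Matrix.mul_sub, Matrix.sub_mul, h.mul_mul_eq_one,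
      mul_bfgsUpdate_mul h.isSymm h.isUnit_det hB, h.mul_mul_eq_one_add B]
  rw [wNorm, hconj]
  exact frobNorm_bfgsUpdate_one_add_sub_one_le hsymm hBH hs' hκ hy'

lemma norm_sq_le_inner_applyM (h : IsInvSqrt M H) {a : ℝ} (ha : opNorm M ≤ a)
    (hBH : wNorm M (B - H) ≤ 1 / 2) (v : Vec p) :
    ‖v‖ ^ 2 ≤ 2 * a ^ 2 * ⟪v, applyM B v⟫ := by
  set w := applyM M⁻¹ v
  have hquad : ⟪v, applyM B v⟫ = ‖w‖ ^ 2 + ⟪w, applyM (M * (B - H) * M) w⟫ := by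
    calc ⟪v, applyM B v⟫ = ⟪w, applyM (M * B * M) w⟫ := by
          rw [mul_applyM, mul_applyM, h.applyM_applyM_inv, ← inner_applyM_left h.isSymm,
            h.applyM_applyM_inv]
      _ = ‖w‖ ^ 2 + ⟪w, applyM (M * (B - H) * M) w⟫ := by
          rw [h.mul_mul_eq_one_add, add_applyM, one_applyM, inner_add_right,
            real_inner_self_eq_norm_sq]
  have hlow : ‖w‖ ^ 2 / 2 ≤ ⟪v, applyM B v⟫ := by
    have hE := (abs_le.1 (abs_inner_applyM_le (M * (B - H) * M) w)).1
    have hE' : frobNorm (M * (B - H) * M) * ‖w‖ ^ 2 ≤ 1 / 2 * ‖w‖ ^ 2 := by gcongr; exact hBH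
    linarith
  calc ‖v‖ ^ 2 ≤ (a * ‖w‖) ^ 2 := by gcongr; exact (h.norm_le_opNorm_mul v).trans (by gcongr)
    _ = 2 * a ^ 2 * (‖w‖ ^ 2 / 2) := by ring
    _ ≤ 2 * a ^ 2 * ⟪v, applyM B v⟫ := by gcongr

end IsInvSqrt

section LipschitzExpansion

open scoped Topology Asymptotics

variable {E F : Type*} [NormedAddCommGroup E] [NormedSpace ℝ E] [NormedAddCommGroup F]
  [NormedSpace ℝ F] {f : E → F} {x : E}

/-- `f` is strictly differentiable at `x` with derivative `f'`, up to an error that is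
`O(max (‖u - x‖, ‖v - x‖) * ‖u - v‖)`. -/
def HasLipschitzExpansionAt (f : E → F) (f' : E →L[ℝ] F) (x : E) : Prop :=
  (fun q : E × E => f q.1 - f q.2 - f' (q.1 - q.2)) =O[𝓝 (x, x)]
    fun q => ‖q - (x, x)‖ * ‖q.1 - q.2‖

lemma HasLipschitzExpansionAt.of_hasFDerivAt {f' : E → E →L[ℝ] F}
    (hf : ∀ᶠ y in 𝓝 x, HasFDerivAt f (f' y) y)
    (hf' : (fun y => f' y - f' x) =O[𝓝 x] fun y => y - x) :
    HasLipschitzExpansionAt f (f' x) x := by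
  obtain ⟨C, hC, hCf⟩ := hf'.exists_pos
  obtain ⟨δ, hδ, hball⟩ := Metric.eventually_nhds_iff.1 (hf.and hCf.bound)
  refine Asymptotics.IsBigO.of_bound C (Metric.eventually_nhds_iff.2 ⟨δ, hδ, fun q hq => ?_⟩)
  rw [norm_mul, norm_norm, norm_norm, ← mul_assoc]
  have hmem : ∀ y ∈ Metric.closedBall x ‖q - (x, x)‖,
      HasFDerivAt f (f' y) y ∧ ‖f' y - f' x‖ ≤ C * ‖y - x‖ := fun y hy =>
    hball (hy.trans_lt (by rwa [← dist_eq_norm]))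
  refine (convex_closedBall x ‖q - (x, x)‖).norm_image_sub_le_of_norm_hasFDerivWithin_le'
    (𝕜 := ℝ) (fun y hy => (hmem y hy).1.hasFDerivWithinAt) (fun y hy => ?_) ?_ ?_
  · refine (hmem y hy).2.trans ?_
    gcongr
    exact mem_closedBall_iff_norm.1 hy
  · exact mem_closedBall_iff_norm.2 (norm_snd_le (q - (x, x)))
  · exact mem_closedBall_iff_norm.2 (norm_fst_le (q - (x, x)))

lemma HasLipschitzExpansionAt.eventually_norm_sub_sub_le {f' : E →L[ℝ] F}
    (hf : HasLipschitzExpansionAt f f' x) :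
    ∀ᶠ L : ℝ in atTop, ∀ r u v, L * r ≤ 1 → ‖u - x‖ ≤ r → ‖v - x‖ ≤ r →
      ‖f u - f v - f' (u - v)‖ ≤ L * r * ‖u - v‖ := by
  obtain ⟨C, hC, hCf⟩ := Asymptotics.IsBigO.exists_pos hf
  obtain ⟨δ, hδ, hball⟩ := Metric.eventually_nhds_iff.1 hCf.bound
  filter_upwards [eventually_ge_atTop C, eventually_gt_atTop (1 / δ)] with L hCL hδL r u v hr hu hv
  have hL : 0 < L := hC.trans_le hCL
  have hrδ : r < δ := by
    rw [div_lt_iff₀ hδ] at hδL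
    exact lt_of_mul_lt_mul_left (hr.trans_lt hδL) hL.le
  have hmax : ‖(u, v) - (x, x)‖ ≤ r := by
    rw [Prod.mk_sub_mk, Prod.norm_mk]
    exact max_le hu hv
  have hbound := @hball (u, v) (by rw [dist_eq_norm]; exact hmax.trans_lt hrδ)
  rw [norm_mul, norm_norm, norm_norm, ← mul_assoc] at hbound
  exact hbound.trans (by gcongr)

end LipschitzExpansion

section CyclicPotential

variable {n : ℕ}

/-- The number of steps after time `t` until the cyclic rule updates the index `i`; it is `0` when
`i` is the index being updated at time `t`. -/
def waitTime (i : Fin n) (t : ℕ) : ℕ :=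
  if t % n ≤ i then i - t % n else n + i - t % n

lemma waitTime_lt (i : Fin n) (t : ℕ) : waitTime i t < n := by
  have := i.isLt
  unfold waitTime
  split <;> omega

lemma waitTime_cyc (hn : 1 ≤ n) (t : ℕ) : waitTime (cyc hn t) t = 0 := by
  simp [waitTime, cyc]

lemma waitTime_succ_add_one {hn : 1 ≤ n} {i : Fin n} {t : ℕ} (hi : i ≠ cyc hn t) :
    waitTime i (t + 1) + 1 = waitTime i t := by
  have hne : (i : ℕ) ≠ t % n := fun h => hi (Fin.ext h)
  have hmod : (t + 1) % n = if t % n + 1 = n then 0 else t % n + 1 := by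
    rw [← Nat.mod_add_mod]
    split_ifs with h
    · rw [h, Nat.mod_self]
    · exact Nat.mod_eq_of_lt (by have := Nat.mod_lt t hn; omega)
  have := i.isLt
  have := Nat.mod_lt t hn
  unfold waitTime
  rw [hmod]
  split_ifs <;> omega

/-- The Lyapunov function `∑ i, (waitTime i t + 1) * r i` of the cyclic rule: the contribution of
`r i` is largest just after `i` has been updated. -/
def cyclicPotential (r : Fin n → ℝ) (t : ℕ) : ℝ :=
  ∑ i, (waitTime i t + 1) * r i

lemma sum_le_cyclicPotential {r : Fin n → ℝ} (hr : ∀ i, 0 ≤ r i) (t : ℕ) :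
    ∑ i, r i ≤ cyclicPotential r t :=
  Finset.sum_le_sum fun i _ => le_mul_of_one_le_left (hr i) (by simp)

lemma cyclicPotential_le_mul_sum {r : Fin n → ℝ} (hr : ∀ i, 0 ≤ r i) (t : ℕ) :
    cyclicPotential r t ≤ n * ∑ i, r i := by
  rw [cyclicPotential, Finset.mul_sum]
  refine Finset.sum_le_sum fun i _ => mul_le_mul_of_nonneg_right ?_ (hr i)
  exact_mod_cast waitTime_lt i t

lemma cyclicPotential_succ_le_sub_add {hn : 1 ≤ n} {r r' : Fin n → ℝ} {t : ℕ}
    (hr' : 0 ≤ r' (cyc hn t)) (hfix : ∀ i ≠ cyc hn t, r' i = r i) :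
    cyclicPotential r' (t + 1) ≤ cyclicPotential r t - ∑ i, r i + n * r' (cyc hn t) := by
  have hterm : ∀ i, (waitTime i (t + 1) + 1) * r' i ≤
      (waitTime i t + 1) * r i - r i + if i = cyc hn t then n * r' (cyc hn t) else 0 := by
    intro i
    by_cases hi : i = cyc hn t
    · have hwait : (waitTime (cyc hn t) (t + 1) : ℝ) + 1 ≤ n := by
        exact_mod_cast waitTime_lt (cyc hn t) (t + 1)
      rw [if_pos hi, hi, waitTime_cyc, Nat.cast_zero]
      linarith [mul_le_mul_of_nonneg_right hwait hr']
    · have hwait : (waitTime i (t + 1) : ℝ) + 1 = waitTime i t := by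
        exact_mod_cast waitTime_succ_add_one hi
      rw [if_neg hi, hfix i hi, hwait]
      linarith
  refine (Finset.sum_le_sum fun i _ => hterm i).trans_eq ?_
  simp [cyclicPotential, Finset.sum_add_distrib, Finset.sum_sub_distrib]

end CyclicPotential

lemma exists_strictMono_tendsto_div_zero {u : ℕ → ℝ} (hpos : ∀ t, 0 < u t)
    (hu : Tendsto u atTop (nhds 0)) :
    ∃ φ : ℕ → ℕ, StrictMono φ ∧ Tendsto (fun k => u (φ (k + 1)) / u (φ k)) atTop (nhds 0) := by
  have hnext : ∀ k t : ℕ, ∃ m, t < m ∧ u m < u t / (k + 1) := fun k t =>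
    ((eventually_gt_atTop t).and
      (hu.eventually_lt_const (div_pos (hpos t) k.cast_add_one_pos))).exists
  choose next hlt hsmall using hnext
  let φ : ℕ → ℕ := fun k => Nat.rec 0 next k
  refine ⟨φ, strictMono_nat_of_lt_succ fun k => hlt k (φ k), ?_⟩
  refine squeeze_zero (fun k => (div_pos (hpos _) (hpos _)).le) (fun k => ?_)
    tendsto_one_div_add_atTop_nhds_zero_nat
  rw [div_le_iff₀ (hpos _), one_div_mul_eq_div]
  exact (hsmall k (φ k)).le

/-- `x`, `z`, `B` are a run of the incremental BFGS iteration for the equation `∑ i, g i x = 0`; the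
IQN method is the case where `g i` is the gradient of `f i`. The new iterate is encoded as a
solution of a linear system, with the common factor `1 / n` cancelled. -/
structure IsIQNRun {p n : ℕ} (hn : 1 ≤ n) (g : Fin n → Vec p → Vec p) (x : ℕ → Vec p)
    (z : Fin n → ℕ → Vec p) (B : Fin n → ℕ → Mat p) : Prop where
  z_zero : ∀ i, z i 0 = x 0
  isSymm : ∀ i t, (B i t).IsSymm
  applyM_sum_eq : ∀ t, applyM (∑ i, B i t) (x (t + 1)) =
    ∑ i, (applyM (B i t) (z i t) - g i (z i t))
  z_cyc : ∀ t, z (cyc hn t) (t + 1) = x (t + 1)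
  z_of_ne : ∀ t, ∀ i ≠ cyc hn t, z i (t + 1) = z i t
  sub_ne_zero : ∀ t, x (t + 1) - z (cyc hn t) t ≠ 0
  B_cyc : ∀ t, B (cyc hn t) (t + 1) = bfgsUpdate (B (cyc hn t) t) (x (t + 1) - z (cyc hn t) t)
    (g (cyc hn t) (x (t + 1)) - g (cyc hn t) (z (cyc hn t) t))
  B_of_ne : ∀ t, ∀ i ≠ cyc hn t, B i (t + 1) = B i t

/-- The local data at a solution `x₀` of `∑ i, g i x = 0`: `H i` is the derivative of `g i` at `x₀`,
`M i` its inverse square root, `a` bounds the conditioning and `L` the nonlinearity. The inequality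
`L * r ≤ 1` confines `u` and `v` to a neighbourhood of `x₀`. -/
structure LocalBounds {p n : ℕ} (g : Fin n → Vec p → Vec p) (H M : Fin n → Mat p) (x₀ : Vec p)
    (a L : ℝ) : Prop where
  sum_eq_zero : ∑ i, g i x₀ = 0
  one_le : 1 ≤ a
  pos : 0 < L
  isInvSqrt : ∀ i, IsInvSqrt (M i) (H i)
  opNorm_le : ∀ i, opNorm (M i) ≤ a
  opNorm_inv_le : ∀ i, opNorm (M i)⁻¹ ≤ a
  norm_sub_sub_le : ∀ i r u v, L * r ≤ 1 → ‖u - x₀‖ ≤ r → ‖v - x₀‖ ≤ r →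
    ‖g i u - g i v - applyM (H i) (u - v)‖ ≤ L * r * ‖u - v‖

section LocalBounds

variable {p n : ℕ} {g : Fin n → Vec p → Vec p} {H M : Fin n → Mat p} {x₀ : Vec p}

lemma exists_localBounds (hg₀ : ∑ i, g i x₀ = 0)
    (hg : ∀ i, HasLipschitzExpansionAt (g i) (toEuclideanCLM (𝕜 := ℝ) (H i)) x₀)
    (hM : ∀ i, IsInvSqrt (M i) (H i)) : ∃ a L, LocalBounds g H M x₀ a L := by
  obtain ⟨a, ha1, haM⟩ := ((eventually_ge_atTop (1 : ℝ)).and (eventually_all.2 fun i =>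
    (eventually_ge_atTop (opNorm (M i))).and (eventually_ge_atTop (opNorm (M i)⁻¹)))).exists
  obtain ⟨L, hL0, hL⟩ := ((eventually_gt_atTop (0 : ℝ)).and (eventually_all.2 fun i =>
    (hg i).eventually_norm_sub_sub_le)).exists
  exact ⟨a, L, hg₀, ha1, hL0, hM, fun i => (haM i).1, fun i => (haM i).2, hL⟩

namespace LocalBounds

variable {a L : ℝ}

lemma norm_applyM_sub_sub_le (h : LocalBounds g H M x₀ a L)
    {i : Fin n} {B : Mat p} {v : Vec p} {η r : ℝ}
    (hB : wNorm (M i) (B - H i) ≤ η) (hv : ‖v - x₀‖ ≤ r) (hr : L * r ≤ η) (hη : η ≤ 1) :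
    ‖applyM B (v - x₀) - (g i v - g i x₀)‖ ≤ 2 * a ^ 2 * η * ‖v - x₀‖ := by
  have hr0 : 0 ≤ r := (norm_nonneg _).trans hv
  have hη0 : 0 ≤ η := (frobNorm_nonneg _).trans hB
  have hdev : ‖applyM (B - H i) (v - x₀)‖ ≤ a ^ 2 * η * ‖v - x₀‖ := by
    refine (norm_applyM_le_wNorm (h.isInvSqrt i).isUnit_det _ _).trans ?_
    gcongr
    · exact frobNorm_nonneg _
    · exact norm_nonneg _
    · exact h.opNorm_inv_le i
  have hrem : ‖g i v - g i x₀ - applyM (H i) (v - x₀)‖ ≤ a ^ 2 * η * ‖v - x₀‖ := by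
    refine (h.norm_sub_sub_le i r v x₀ (hr.trans hη) hv (by simpa using hr0)).trans ?_
    exact mul_le_mul_of_nonneg_right
      (hr.trans (le_mul_of_one_le_left hη0 (one_le_pow₀ h.one_le))) (norm_nonneg _)
  calc ‖applyM B (v - x₀) - (g i v - g i x₀)‖
      = ‖applyM (B - H i) (v - x₀) - (g i v - g i x₀ - applyM (H i) (v - x₀))‖ := by
        rw [sub_applyM]
        congr 1
        abel
    _ ≤ a ^ 2 * η * ‖v - x₀‖ + a ^ 2 * η * ‖v - x₀‖ := norm_sub_le_of_le hdev hrem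
    _ = 2 * a ^ 2 * η * ‖v - x₀‖ := by ring

lemma mul_norm_le_norm_applyM_sum (h : LocalBounds g H M x₀ a L) {B : Fin n → Mat p}
    (hB : ∀ i, wNorm (M i) (B i - H i) ≤ 1 / 2) (v : Vec p) :
    n * ‖v‖ ≤ 2 * a ^ 2 * ‖applyM (∑ i, B i) v‖ := by
  rcases eq_or_ne v 0 with rfl | hv
  · rw [norm_zero, mul_zero]
    positivity
  refine le_of_mul_le_mul_right ?_ (norm_pos_iff.2 hv)
  calc n * ‖v‖ * ‖v‖ = ∑ _i : Fin n, ‖v‖ ^ 2 := by simp [sq, mul_assoc]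
    _ ≤ ∑ i, 2 * a ^ 2 * ⟪v, applyM (B i) v⟫ :=
      Finset.sum_le_sum fun i _ => (h.isInvSqrt i).norm_sq_le_inner_applyM (h.opNorm_le i) (hB i) v
    _ = 2 * a ^ 2 * ⟪v, applyM (∑ i, B i) v⟫ := by rw [sum_applyM, inner_sum, Finset.mul_sum]
    _ ≤ 2 * a ^ 2 * (‖v‖ * ‖applyM (∑ i, B i) v‖) := by
      gcongr
      exact real_inner_le_norm _ _
    _ = 2 * a ^ 2 * ‖applyM (∑ i, B i) v‖ * ‖v‖ := by ring

theorem mul_norm_sub_le (h : LocalBounds g H M x₀ a L)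
    {B : Fin n → Mat p} {z : Fin n → Vec p} {x' : Vec p} {η : ℝ}
    (hB : ∀ i, wNorm (M i) (B i - H i) ≤ η) (hz : L * ∑ i, ‖z i - x₀‖ ≤ η) (hη : η ≤ 1 / 2)
    (hx' : applyM (∑ i, B i) x' = ∑ i, (applyM (B i) (z i) - g i (z i))) :
    n * ‖x' - x₀‖ ≤ 4 * a ^ 4 * η * ∑ i, ‖z i - x₀‖ := by
  have herror : applyM (∑ i, B i) (x' - x₀) =
      ∑ i, (applyM (B i) (z i - x₀) - (g i (z i) - g i x₀)) := by
    simp only [applyM_sub, hx', sum_applyM, Finset.sum_sub_distrib, h.sum_eq_zero]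
    abel
  have hnorm : ‖applyM (∑ i, B i) (x' - x₀)‖ ≤ 2 * a ^ 2 * η * ∑ i, ‖z i - x₀‖ := by
    rw [herror, Finset.mul_sum]
    refine norm_sum_le_of_le _ fun i hi => h.norm_applyM_sub_sub_le (hB i) ?_ hz (by linarith)
    exact Finset.single_le_sum (f := fun i => ‖z i - x₀‖) (fun j _ => norm_nonneg _) hi
  calc n * ‖x' - x₀‖ ≤ 2 * a ^ 2 * ‖applyM (∑ i, B i) (x' - x₀)‖ :=
        h.mul_norm_le_norm_applyM_sum (fun i => (hB i).trans hη) _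
    _ ≤ 2 * a ^ 2 * (2 * a ^ 2 * η * ∑ i, ‖z i - x₀‖) := by gcongr
    _ = 4 * a ^ 4 * η * ∑ i, ‖z i - x₀‖ := by ring

theorem wNorm_bfgsUpdate_sub_le (h : LocalBounds g H M x₀ a L)
    {i : Fin n} {B : Mat p} (hB : B.IsSymm)
    (hBH : wNorm (M i) (B - H i) ≤ 1 / 3) {u v : Vec p} (huv : u - v ≠ 0) {r : ℝ}
    (hu : ‖u - x₀‖ ≤ r) (hv : ‖v - x₀‖ ≤ r) (hr : a ^ 2 * L * r ≤ 1 / 2) :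
    wNorm (M i) (bfgsUpdate B (u - v) (g i u - g i v) - H i) ≤
      wNorm (M i) (B - H i) + 7 * (a ^ 2 * L * r) := by
  have hLr0 : 0 ≤ L * r := mul_nonneg h.pos.le ((norm_nonneg _).trans hu)
  have hLr : L * r ≤ a ^ 2 * L * r := by
    rw [mul_assoc]
    exact le_mul_of_one_le_left hLr0 (one_le_pow₀ h.one_le)
  have hcond : opNorm (M i) ^ 2 * (L * r) ≤ a ^ 2 * L * r := by
    have hnonneg : 0 ≤ opNorm (M i) := norm_nonneg _
    rw [mul_assoc]
    gcongr
    exact h.opNorm_le i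
  refine ((h.isInvSqrt i).wNorm_bfgsUpdate_sub_le hB hBH huv
    (h.norm_sub_sub_le i r u v (by linarith) hu hv) (hcond.trans hr)).trans ?_
  gcongr

end LocalBounds

end LocalBounds

/-- The distances from the stored copies `z i t` to `x₀`. -/
def copyError {p n : ℕ} (z : Fin n → ℕ → Vec p) (x₀ : Vec p) (t : ℕ) (i : Fin n) : ℝ :=
  ‖z i t - x₀‖

/-- The region preserved by the iteration: the deviation of every `B i` from `H i`, together with
all of its possible future growth, is at most `1 / (8 * a ^ 4)`. One BFGS update increases the
deviation by at most `7 * a ^ 2 * L * ∑ i, copyError z x₀ t i`, and the potential decreases by at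
least half of that sum, whence the factor `14`. -/
def InBasin {p n : ℕ} (H M : Fin n → Mat p) (x₀ : Vec p) (a L : ℝ) (z : Fin n → ℕ → Vec p)
    (B : Fin n → ℕ → Mat p) (t : ℕ) : Prop :=
  ∀ i, wNorm (M i) (B i t - H i) + 14 * (a ^ 2 * L * cyclicPotential (copyError z x₀ t) t) ≤
    1 / (8 * a ^ 4)

section IQN

variable {p n : ℕ} {hn : 1 ≤ n} {g : Fin n → Vec p → Vec p} {H M : Fin n → Mat p} {x₀ : Vec p}
  {a L : ℝ} {x : ℕ → Vec p} {z : Fin n → ℕ → Vec p} {B : Fin n → ℕ → Mat p} {t : ℕ}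

lemma copyError_nonneg (i : Fin n) : 0 ≤ copyError z x₀ t i := norm_nonneg _

lemma copyError_le_sum (i : Fin n) : copyError z x₀ t i ≤ ∑ j, copyError z x₀ t j :=
  Finset.single_le_sum (fun j _ => copyError_nonneg j) (Finset.mem_univ i)

lemma sum_copyError_nonneg : 0 ≤ ∑ i, copyError z x₀ t i :=
  Finset.sum_nonneg fun i _ => copyError_nonneg i

lemma cyclicPotential_copyError_nonneg : 0 ≤ cyclicPotential (copyError z x₀ t) t :=
  sum_copyError_nonneg.trans (sum_le_cyclicPotential copyError_nonneg t)

namespace LocalBounds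

lemma inBasin_zero (h : LocalBounds g H M x₀ a L)
    (hn : 1 ≤ n) (hz : ∀ i, ‖z i 0 - x₀‖ ≤ 1 / (224 * a ^ 6 * L * n ^ 2))
    (hB : ∀ i, wNorm (M i) (B i 0 - H i) ≤ 1 / (16 * a ^ 4)) : InBasin H M x₀ a L z B 0 := by
  intro i
  have ha : 0 < a := one_pos.trans_le h.one_le
  have hL : 0 < L := h.pos
  have hn0 : (n : ℝ) ≠ 0 := Nat.cast_ne_zero.2 (Nat.one_le_iff_ne_zero.1 hn)
  have hpot : cyclicPotential (copyError z x₀ 0) 0 ≤ n * (n * (1 / (224 * a ^ 6 * L * n ^ 2))) := by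
    refine (cyclicPotential_le_mul_sum copyError_nonneg 0).trans ?_
    gcongr
    exact (Finset.sum_le_card_nsmul _ _ _ fun j _ => hz j).trans_eq (by simp)
  calc wNorm (M i) (B i 0 - H i) + 14 * (a ^ 2 * L * cyclicPotential (copyError z x₀ 0) 0)
      ≤ 1 / (16 * a ^ 4) + 14 * (a ^ 2 * L * (n * (n * (1 / (224 * a ^ 6 * L * n ^ 2))))) := by
        gcongr
        exact hB i
    _ = 1 / (8 * a ^ 4) := by
        field_simp [hn0]
        norm_num

lemma wNorm_le_of_inBasin (h : LocalBounds g H M x₀ a L)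
    (hb : InBasin H M x₀ a L z B t) (i : Fin n) :
    wNorm (M i) (B i t - H i) ≤ 1 / (8 * a ^ 4) := by
  have hV := cyclicPotential_copyError_nonneg (z := z) (x₀ := x₀) (t := t)
  have hL := h.pos
  refine le_trans ?_ (hb i)
  exact le_add_of_nonneg_right (by positivity)

lemma mul_sum_copyError_le_of_inBasin (h : LocalBounds g H M x₀ a L)
    (hn : 1 ≤ n) (hb : InBasin H M x₀ a L z B t) :
    a ^ 2 * L * ∑ i, copyError z x₀ t i ≤ 1 / (8 * a ^ 4) := by
  have hL := h.pos
  have hle : a ^ 2 * L * ∑ i, copyError z x₀ t i ≤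
      a ^ 2 * L * cyclicPotential (copyError z x₀ t) t := by
    gcongr
    exact sum_le_cyclicPotential copyError_nonneg t
  have hnonneg : 0 ≤ a ^ 2 * L * ∑ i, copyError z x₀ t i :=
    mul_nonneg (by positivity) sum_copyError_nonneg
  have hw : 0 ≤ wNorm (M ⟨0, hn⟩) (B ⟨0, hn⟩ t - H ⟨0, hn⟩) := frobNorm_nonneg _
  linarith [hb ⟨0, hn⟩]

lemma one_div_eight_mul_pow_le (h : LocalBounds g H M x₀ a L) : 1 / (8 * a ^ 4) ≤ 1 / 8 :=
  one_div_le_one_div_of_le (by norm_num) (by linarith [one_le_pow₀ h.one_le (n := 4)])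

lemma mul_norm_succ_sub_le (h : LocalBounds g H M x₀ a L)
    (hrun : IsIQNRun hn g x z B) (hb : InBasin H M x₀ a L z B t) :
    n * ‖x (t + 1) - x₀‖ ≤ (∑ i, copyError z x₀ t i) / 2 := by
  have ha : 0 < a := one_pos.trans_le h.one_le
  have hL := h.pos
  have hLsum : L * ∑ i, copyError z x₀ t i ≤ 1 / (8 * a ^ 4) := by
    refine le_trans ?_ (h.mul_sum_copyError_le_of_inBasin hn hb)
    gcongr ?_ * _
    · exact sum_copyError_nonneg
    · exact le_mul_of_one_le_left hL.le (one_le_pow₀ h.one_le)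
  refine (h.mul_norm_sub_le (h.wNorm_le_of_inBasin hb) hLsum
    (h.one_div_eight_mul_pow_le.trans (by norm_num))
    (hrun.applyM_sum_eq t)).trans_eq ?_
  change _ * ∑ i, copyError z x₀ t i = _
  field_simp
  ring

lemma norm_succ_sub_le (h : LocalBounds g H M x₀ a L)
    (hrun : IsIQNRun hn g x z B) (hb : InBasin H M x₀ a L z B t) :
    ‖x (t + 1) - x₀‖ ≤ ∑ i, copyError z x₀ t i := by
  have hn1 : (1 : ℝ) ≤ n := by exact_mod_cast hn
  linarith [h.mul_norm_succ_sub_le hrun hb, sum_copyError_nonneg (z := z) (x₀ := x₀) (t := t),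
    le_mul_of_one_le_left (norm_nonneg (x (t + 1) - x₀)) hn1]

lemma cyclicPotential_succ_le (h : LocalBounds g H M x₀ a L)
    (hrun : IsIQNRun hn g x z B) (hb : InBasin H M x₀ a L z B t) :
    cyclicPotential (copyError z x₀ (t + 1)) (t + 1) ≤
      cyclicPotential (copyError z x₀ t) t - (∑ i, copyError z x₀ t i) / 2 := by
  have hupd : copyError z x₀ (t + 1) (cyc hn t) = ‖x (t + 1) - x₀‖ := by
    rw [copyError, hrun.z_cyc]
  have hdecr := cyclicPotential_succ_le_sub_add (hn := hn) (r := copyError z x₀ t)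
    (copyError_nonneg (z := z) (x₀ := x₀) (t := t + 1) (cyc hn t))
    fun i hi => by rw [copyError, copyError, hrun.z_of_ne t i hi]
  rw [hupd] at hdecr
  linarith [h.mul_norm_succ_sub_le hrun hb]

lemma wNorm_succ_le (h : LocalBounds g H M x₀ a L)
    (hrun : IsIQNRun hn g x z B) (hb : InBasin H M x₀ a L z B t) (i : Fin n) :
    wNorm (M i) (B i (t + 1) - H i) ≤
      wNorm (M i) (B i t - H i) + 7 * (a ^ 2 * L * ∑ j, copyError z x₀ t j) := by
  by_cases hi : i = cyc hn t
  · subst hi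
    rw [hrun.B_cyc]
    exact h.wNorm_bfgsUpdate_sub_le (hrun.isSymm _ t)
      ((h.wNorm_le_of_inBasin hb _).trans (h.one_div_eight_mul_pow_le.trans (by norm_num)))
      (hrun.sub_ne_zero t)
      (h.norm_succ_sub_le hrun hb) (copyError_le_sum _)
      ((h.mul_sum_copyError_le_of_inBasin hn hb).trans
        (h.one_div_eight_mul_pow_le.trans (by norm_num)))
  · rw [hrun.B_of_ne t i hi]
    have hL := h.pos
    exact le_add_of_nonneg_right
      (mul_nonneg (by norm_num) (mul_nonneg (by positivity) sum_copyError_nonneg))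

lemma inBasin_succ (h : LocalBounds g H M x₀ a L)
    (hrun : IsIQNRun hn g x z B) (hb : InBasin H M x₀ a L z B t) :
    InBasin H M x₀ a L z B (t + 1) := by
  intro i
  have hL := h.pos
  have hpot : a ^ 2 * L * cyclicPotential (copyError z x₀ (t + 1)) (t + 1) ≤
      a ^ 2 * L * (cyclicPotential (copyError z x₀ t) t - (∑ j, copyError z x₀ t j) / 2) := by
    gcongr
    exact h.cyclicPotential_succ_le hrun hb
  linarith [h.wNorm_succ_le hrun hb i, hb i]

lemma inBasin (h : LocalBounds g H M x₀ a L)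
    (hrun : IsIQNRun hn g x z B) (hb : InBasin H M x₀ a L z B 0) (t : ℕ) :
    InBasin H M x₀ a L z B t := by
  induction t with
  | zero => exact hb
  | succ t ih => exact h.inBasin_succ hrun ih

lemma cyclicPotential_le_pow_mul (h : LocalBounds g H M x₀ a L)
    (hrun : IsIQNRun hn g x z B) (hb : InBasin H M x₀ a L z B 0) (t : ℕ) :
    cyclicPotential (copyError z x₀ t) t ≤
      (1 - 1 / (2 * n) : ℝ) ^ t * cyclicPotential (copyError z x₀ 0) 0 := by
  have hn1 : (1 : ℝ) ≤ n := by exact_mod_cast hn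
  have hρ : 1 / (2 * n : ℝ) ≤ 1 := (div_le_one (by positivity)).2 (by linarith)
  refine le_geom (u := fun t => cyclicPotential (copyError z x₀ t) t) (by linarith) t
    fun k _ => (h.cyclicPotential_succ_le hrun (h.inBasin hrun hb k)).trans ?_
  have hsum : cyclicPotential (copyError z x₀ k) k / (2 * n) ≤ (∑ i, copyError z x₀ k i) / 2 := by
    rw [div_le_div_iff₀ (by positivity) two_pos]
    linarith [cyclicPotential_le_mul_sum (copyError_nonneg (z := z) (x₀ := x₀) (t := k)) k]
  rw [sub_mul, one_mul, one_div_mul_eq_div]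
  linarith

theorem tendsto_norm_sub (h : LocalBounds g H M x₀ a L)
    (hrun : IsIQNRun hn g x z B) (hb : InBasin H M x₀ a L z B 0) :
    Tendsto (fun t => ‖x t - x₀‖) atTop (nhds 0) := by
  rw [← tendsto_add_atTop_iff_nat 1]
  have hn1 : (1 : ℝ) ≤ n := by exact_mod_cast hn
  have hρ0 : 0 ≤ 1 - 1 / (2 * n : ℝ) := sub_nonneg.2 ((div_le_one (by positivity)).2 (by linarith))
  have hρ1 : 1 - 1 / (2 * n : ℝ) < 1 := sub_lt_self 1 (by positivity)
  have hgeom := (tendsto_pow_atTop_nhds_zero_of_lt_one hρ0 hρ1).mul_const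
    (cyclicPotential (copyError z x₀ 0) 0)
  rw [zero_mul] at hgeom
  exact squeeze_zero (fun t => norm_nonneg _) (fun t =>
    (h.norm_succ_sub_le hrun (h.inBasin hrun hb t)).trans
      ((sum_le_cyclicPotential copyError_nonneg t).trans
        (h.cyclicPotential_le_pow_mul hrun hb t))) hgeom

end LocalBounds

end IQN

theorem stmt9_general {p n : ℕ} (hn : 1 ≤ n) {g : Fin n → Vec p → Vec p} {H M : Fin n → Mat p}
    {x₀ : Vec p} (hg₀ : ∑ i, g i x₀ = 0)
    (hg : ∀ i, HasLipschitzExpansionAt (g i) (toEuclideanCLM (𝕜 := ℝ) (H i)) x₀)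
    (hM : ∀ i, IsInvSqrt (M i) (H i)) :
    ∃ ε > (0 : ℝ), ∃ δ > (0 : ℝ), ∀ x z B, IsIQNRun hn g x z B →
      (∀ t, x t ≠ x₀) →
      ‖x 0 - x₀‖ < ε →
      (∀ i, wNorm (M i) (B i 0 - H i) < δ) →
      ∃ tk : ℕ → ℕ, StrictMono tk ∧
        Tendsto (fun k => ‖x (tk (k + 1)) - x₀‖ / ‖x (tk k) - x₀‖) atTop (nhds 0) := by
  obtain ⟨a, L, h⟩ := exists_localBounds hg₀ hg hM
  have ha : 0 < a := one_pos.trans_le h.one_le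
  have hL : 0 < L := h.pos
  refine ⟨1 / (224 * a ^ 6 * L * n ^ 2), by positivity, 1 / (16 * a ^ 4), by positivity,
    fun x z B hrun hne hx hB => ?_⟩
  have hbasin : InBasin H M x₀ a L z B 0 :=
    h.inBasin_zero hn (fun i => by rw [hrun.z_zero]; exact hx.le) fun i => (hB i).le
  exact exists_strictMono_tendsto_div_zero (fun t => norm_pos_iff.2 (sub_ne_zero.2 (hne t)))
    (h.tendsto_norm_sub hrun hbasin)

namespace IQNProblem

variable {p n : ℕ} (P : IQNProblem p n)

lemma sum_gradient_xstar : ∑ i, gradient (P.f i) P.xstar = 0 := by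
  have hgrad : ∀ i, HasGradientAt (P.f i) (gradient (P.f i) P.xstar) P.xstar := fun i =>
    ((P.hC2 i).differentiable two_ne_zero).differentiableAt.hasGradientAt
  have hmean : HasGradientAt (fun x => (n : ℝ)⁻¹ * ∑ i, P.f i x)
      ((n : ℝ)⁻¹ • ∑ i, gradient (P.f i) P.xstar) P.xstar := by
    rw [hasGradientAt_iff_hasFDerivAt, map_smulₛₗ, map_sum]
    exact (HasFDerivAt.fun_sum fun i _ => (hgrad i).hasFDerivAt).const_mul _
  have hn : (n : ℝ)⁻¹ ≠ 0 := inv_ne_zero (Nat.cast_ne_zero.2 (Nat.one_le_iff_ne_zero.1 P.hn))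
  exact (smul_eq_zero.1 (hmean.gradient.symm.trans P.hopt)).resolve_left hn

lemma hasLipschitzExpansionAt_gradient (i : Fin n) :
    HasLipschitzExpansionAt (gradient (P.f i)) (toEuclideanCLM (𝕜 := ℝ) (P.Hess i P.xstar))
      P.xstar := by
  refine .of_hasFDerivAt (f' := fun y => toEuclideanCLM (𝕜 := ℝ) (P.Hess i y))
    (Eventually.of_forall (P.hHess i)) (Asymptotics.IsBigO.of_bound P.Ltil (.of_forall fun y => ?_))
  rw [← map_sub]
  exact P.hLip i y P.xstar

end IQNProblem

lemma IQNState.isIQNRun {p n : ℕ} {P : IQNProblem p n} (S : IQNState P) :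
    IsIQNRun P.hn (fun i => gradient (P.f i)) S.x S.z S.B where
  z_zero := S.hz0
  isSymm := S.hsym
  applyM_sum_eq t := by
    have hn : (n : ℝ)⁻¹ ≠ 0 := inv_ne_zero (Nat.cast_ne_zero.2 (Nat.one_le_iff_ne_zero.1 P.hn))
    have hsolve : applyM ((n : ℝ)⁻¹ • ∑ i, S.B i t) (S.x (t + 1)) = (n : ℝ)⁻¹ •
        ∑ i, (applyM (S.B i t) (S.z i t) - gradient (P.f i) (S.z i t)) := by
      rw [S.hx, ← mul_applyM, mul_nonsing_inv _ ((isUnit_iff_isUnit_det _).1 (S.hinv t)),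
        one_applyM, ← smul_sub, Finset.sum_sub_distrib]
    rw [smul_applyM] at hsolve
    exact smul_right_injective (Vec p) hn hsolve
  z_cyc := S.hzupd
  z_of_ne := S.hzfix
  sub_ne_zero t := S.hzupd t ▸ S.hs t
  B_cyc t := S.hzupd t ▸ S.hBupd t
  B_of_ne := S.hBfix

/-- first part of Theorem 2 of the paper: locally, some subsequence of
the residuals `‖x^t − x*‖` converges to zero superlinearly. -/
theorem stmt9 {p n : ℕ} (P : IQNProblem p n) (M : Fin n → Mat p)
    (hM : ∀ i, (M i).PosDef ∧ M i * P.Hess i P.xstar * M i = 1) :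
    ∃ ε > (0:ℝ), ∃ δ > (0:ℝ), ∀ S : IQNState P,
      (∀ t, S.x t ≠ P.xstar) →
      ‖S.x 0 - P.xstar‖ < ε →
      (∀ i, wNorm (M i) (S.B i 0 - P.Hess i P.xstar) < δ) →
      ∃ tk : ℕ → ℕ, StrictMono tk ∧
        Tendsto (fun k : ℕ =>
            ‖S.x (tk (k+1)) - P.xstar‖ / ‖S.x (tk k) - P.xstar‖)
          atTop (nhds 0) := by
  obtain ⟨ε, hε, δ, hδ, h⟩ := stmt9_general P.hn P.sum_gradient_xstar
    P.hasLipschitzExpansionAt_gradient fun i => .of_posDef (hM i).1 (hM i).2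
  exact ⟨ε, hε, δ, hδ, fun S => h S.x S.z S.B S.isIQNRun⟩

end
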